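/- arXiv:1905.08445 — 2 statements merged into one kernel-verified Lean document; each statement's English description precedes it below -/
import Mathlib

section
/- Function-value proximity in terms of level sets: under Assumption H1 and the Bregman setting with 0 < ε < m/L, for every x̄ ∈ ℝ^n with F̄ = F(x̄), every x with F(x) > F̄, and every t ∈ T(x), one has F(t) − F̄ ≤ E(x) − F̄ ≤ c₀ · infDist(x, [F ≤ F̄])², where c₀ = (3/2)L + M/(2ε) and [F ≤ F̄] = {y | F(y) ≤ F̄}. -/
open Set Metric Filter Topology
open scoped RealInnerProductSpace

noncomputable section

variable {E : Type*} [NormedAddCommGroup E] [InnerProductSpace ℝ E] [FiniteDimensional ℝ E]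

/-- The Bregman distance generated by `K` (with gradient `K'`). -/
def bregD (K : E → ℝ) (K' : E → E) (x y : E) : ℝ := K y - K x - ⟪K' x, y - x⟫

/-- The Bregman proximal mapping: the set of global minimizers of
`y ↦ ⟪∇f x, y - x⟫ + g y + D(x,y)/ε`. -/
def bregT (f' : E → E) (g : E → ℝ) (K : E → ℝ) (K' : E → E) (ε : ℝ) (x : E) : Set E :=
  {y | ∀ z, ⟪f' x, y - x⟫ + g y + bregD K K' x y / ε ≤ ⟪f' x, z - x⟫ + g z + bregD K K' x z / ε}

/-- The Bregman proximal envelope. -/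
def bregEnv (f : E → ℝ) (f' : E → E) (g : E → ℝ) (K : E → ℝ) (K' : E → E) (ε : ℝ) (x : E) : ℝ :=
  ⨅ y : E, (f x + ⟪f' x, y - x⟫ + g y + bregD K K' x y / ε)

theorem descent_aux (h : E → ℝ) (h' : E → E) (C : ℝ)
    (hh : ∀ x, HasGradientAt h (h' x) x)
    (hlip : ∀ x y, ‖h' x - h' y‖ ≤ C * ‖x - y‖) (x y : E) :
    h y ≤ h x + ⟪h' x, y - x⟫ + C / 2 * ‖y - x‖ ^ 2 := by
  have hd : ∀ s : ℝ, HasDerivAt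
      (fun s : ℝ => h (x + s • (y - x)) - s * ⟪h' x, y - x⟫ - C / 2 * ‖y - x‖ ^ 2 * s ^ 2)
      (⟪h' (x + s • (y - x)), y - x⟫ - ⟪h' x, y - x⟫ - C * ‖y - x‖ ^ 2 * s) s := by
    intro s
    have h1 : HasDerivAt (fun s : ℝ => x + s • (y - x)) (y - x) s := by
      simpa using ((hasDerivAt_id s).smul_const (y - x)).const_add x
    have h2 := (hh (x + s • (y - x))).hasFDerivAt.comp_hasDerivAt s h1
    have h3 := (h2.sub ((hasDerivAt_id s).mul_const ⟪h' x, y - x⟫)).sub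
      ((hasDerivAt_pow 2 s).const_mul (C / 2 * ‖y - x‖ ^ 2))
    refine HasDerivAt.congr_deriv h3 ?_
    simp
    ring
  have hanti := antitoneOn_of_deriv_nonpos (convex_Icc (0 : ℝ) 1)
    (fun s _ => (hd s).continuousAt.continuousWithinAt)
    (fun s _ => (hd s).differentiableAt.differentiableWithinAt) (by
      intro s hs
      rw [interior_Icc] at hs
      rw [(hd s).deriv, ← inner_sub_left]
      have h1 := real_inner_le_norm (h' (x + s • (y - x)) - h' x) (y - x)
      have h2 := hlip (x + s • (y - x)) x
      rw [add_sub_cancel_left, norm_smul, Real.norm_of_nonneg hs.1.le] at h2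
      have h3 := mul_le_mul_of_nonneg_right h2 (norm_nonneg (y - x))
      nlinarith)
  have := hanti (left_mem_Icc.2 zero_le_one) (right_mem_Icc.2 zero_le_one) zero_le_one
  simp at this
  linarith

/-- Function-value proximity in terms of level sets:
`F(t) - F̄ ≤ E(x) - F̄ ≤ c₀ · infDist(x, [F ≤ F̄])²` with `c₀ = (3/2)L + M/(2ε)`. -/
theorem stmt8
    (f g : E → ℝ) (f' : E → E) (L : ℝ)
    (hL : 0 < L)
    (hf : ∀ x, HasGradientAt f (f' x) x)
    (hlip : ∀ x y, ‖f' x - f' y‖ ≤ L * ‖x - y‖)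
    (hg : Continuous g)
    (hlevel : ∀ r : ℝ, Bornology.IsBounded {x : E | f x + g x ≤ r})
    (K : E → ℝ) (K' : E → E) (m M : ℝ)
    (hm : 0 < m) (hmM : m ≤ M)
    (hK : ∀ x, HasGradientAt K (K' x) x)
    (hKstrong : ∀ x y : E, K x + ⟪K' x, y - x⟫ + m / 2 * ‖y - x‖ ^ 2 ≤ K y)
    (hKlip : ∀ x y, ‖K' x - K' y‖ ≤ M * ‖x - y‖)
    (ε : ℝ) (hε : 0 < ε)
    (hεL : ε * L < m) :
    ∀ xbar x : E, f xbar + g xbar < f x + g x →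
      ∀ t ∈ bregT f' g K K' ε x,
        f t + g t - (f xbar + g xbar) ≤ bregEnv f f' g K K' ε x - (f xbar + g xbar) ∧
        bregEnv f f' g K K' ε x - (f xbar + g xbar) ≤
          (3 / 2 * L + M / (2 * ε)) *
            Metric.infDist x {y : E | f y + g y ≤ f xbar + g xbar} ^ 2 := by
  intro xbar x hx t ht
  have hfup := descent_aux f f' L hf hlip
  have hKup := descent_aux K K' M hK hKlip
  have hflow := descent_aux (fun z => - f z) (fun z => - f' z) L
    (fun z => by
      have := (hf z).hasFDerivAt.neg
      rw [hasGradientAt_iff_hasFDerivAt, map_neg]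
      exact this)
    (fun a b => by
      rw [neg_sub_neg, norm_sub_rev]
      exact hlip a b)
  constructor
  · have : f t + g t ≤ bregEnv f f' g K K' ε x := by
      unfold bregEnv
      refine le_ciInf fun z => ?_
      have h1 := ht z
      have h2 := hfup x t
      have h3 : L / 2 * ‖t - x‖ ^ 2 ≤ bregD K K' x t / ε := by
        rw [le_div_iff₀ hε]
        have h4 := hKstrong x t
        have h5 := mul_le_mul_of_nonneg_right hεL.le (sq_nonneg ‖t - x‖)
        unfold bregD
        nlinarith
      linarith
    linarith
  · have hfc : Continuous f := continuous_iff_continuousAt.2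
      fun z => (hf z).hasFDerivAt.continuousAt
    have hcl : IsClosed {y : E | f y + g y ≤ f xbar + g xbar} :=
      isClosed_le (hfc.add hg) continuous_const
    haveI : ProperSpace E := FiniteDimensional.proper ℝ E
    obtain ⟨y, hy, hdist⟩ := hcl.exists_infDist_eq_dist ⟨xbar, le_refl (f xbar + g xbar)⟩ x
    rw [hdist, dist_comm, dist_eq_norm]
    have hE : bregEnv f f' g K K' ε x ≤ f x + ⟪f' x, y - x⟫ + g y + bregD K K' x y / ε := by
      refine ciInf_le ⟨f x + ⟪f' x, t - x⟫ + g t + bregD K K' x t / ε, ?_⟩ y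
      rintro _ ⟨z, rfl⟩
      have h1 := ht z
      dsimp only
      linarith
    have h1 := hflow x y
    simp only [inner_neg_left] at h1
    have h2 : bregD K K' x y / ε ≤ M / (2 * ε) * ‖y - x‖ ^ 2 := by
      rw [div_le_iff₀ hε]
      have h3 := hKup x y
      have h4 : M / (2 * ε) * ‖y - x‖ ^ 2 * ε = M / 2 * ‖y - x‖ ^ 2 := by
        field_simp
      rw [h4]
      unfold bregD
      linarith
    have hy' : f y + g y ≤ f xbar + g xbar := hy
    have h5 := mul_nonneg hL.le (sq_nonneg ‖y - x‖)
    linarith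
end
end

section
/- Linear convergence of VBPG under the level-set subdifferential error bound: let (x^k) be a VBPG sequence converging to x̄ and F̄ = F(x̄). Suppose the level-set subdifferential error bound holds at x̄ with exponent γ ∈ (0,1]: there exist η, ν, c₃ > 0 with infDist(x, [F ≤ F̄])^γ ≤ c₃·‖ξ‖ for every x ∈ 𝔅(x̄;η,ν) and every ξ ∈ ∂_P F(x). Then there exist β ∈ (0,1), k₀ ∈ ℕ and C > 0 such that: (1) F(x^{k+1}) − F̄ ≤ β·(F(x^k) − F̄) for all k ≥ k₀ (Q-linear convergence of values); (2) the series ∑_{k} (F(x^k) − F̄) converges; and (3) ‖x^k − x̄‖ ≤ C·(√β)^k for all k (R-linear convergence of the iterates). -/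
open Set Metric Filter Topology
open scoped RealInnerProductSpace

noncomputable section

variable {E : Type*} [NormedAddCommGroup E] [InnerProductSpace ℝ E] [FiniteDimensional ℝ E]

/-- The proximal subdifferential of `ψ` at `x`. -/
def proxSubdiff (ψ : E → ℝ) (x : E) : Set E :=
  {ξ | ∃ ρ > (0:ℝ), ∃ η > (0:ℝ), ∀ y, ‖y - x‖ < η →
    ψ y ≥ ψ x + ⟪ξ, y - x⟫ - ρ * ‖y - x‖ ^ 2}

/-- Descent lemma. -/
theorem aux_descent (f : E → ℝ) (f' : E → E) (L : ℝ)
    (hf : ∀ x, HasGradientAt f (f' x) x)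
    (hlip : ∀ x y, ‖f' x - f' y‖ ≤ L * ‖x - y‖) (x y : E) :
    f y ≤ f x + ⟪f' x, y - x⟫ + L / 2 * ‖y - x‖ ^ 2 := by
  set v := y - x with hv
  let φ : ℝ → ℝ := fun t => f (x + t • v) - t * ⟪f' x, v⟫ - L / 2 * t ^ 2 * ‖v‖ ^ 2
  have hd : ∀ t, HasDerivAt φ (⟪f' (x + t • v), v⟫ - ⟪f' x, v⟫ - L * t * ‖v‖ ^ 2) t := by
    intro t
    have h1 : HasDerivAt (fun t : ℝ => x + t • v) v t := by
      simpa using ((hasDerivAt_id t).smul_const v).const_add x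
    have h2 : HasDerivAt (fun t : ℝ => f (x + t • v)) (⟪f' (x + t • v), v⟫) t := by
      have := (hf (x + t • v)).hasFDerivAt.comp_hasDerivAt t h1
      simp only [InnerProductSpace.toDual_apply_apply] at this
      exact this
    have h3 : HasDerivAt (fun t : ℝ => t * ⟪f' x, v⟫) (⟪f' x, v⟫) t := by
      simpa using (hasDerivAt_id t).mul_const (⟪f' x, v⟫)
    have h4 : HasDerivAt (fun t : ℝ => L / 2 * t ^ 2 * ‖v‖ ^ 2) (L * t * ‖v‖ ^ 2) t := by
      have := (((hasDerivAt_pow 2 t)).const_mul (L / 2)).mul_const (‖v‖ ^ 2)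
      refine this.congr_deriv ?_
      push_cast; ring
    exact (h2.sub h3).sub h4
  have hanti : AntitoneOn φ (Set.Icc 0 1) := by
    apply antitoneOn_of_deriv_nonpos (convex_Icc 0 1)
    · exact fun t _ => (hd t).continuousAt.continuousWithinAt
    · exact fun t _ => (hd t).differentiableAt.differentiableWithinAt
    · intro t ht
      rw [interior_Icc] at ht
      rw [(hd t).deriv, ← inner_sub_left]
      have h1 := real_inner_le_norm (f' (x + t • v) - f' x) v
      have h2 := hlip (x + t • v) x
      rw [add_sub_cancel_left, norm_smul, Real.norm_of_nonneg ht.1.le] at h2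
      have h3 := mul_le_mul_of_nonneg_right h2 (norm_nonneg v)
      nlinarith
  have := hanti (by simp : (0:ℝ) ∈ Set.Icc (0:ℝ) 1) (by simp : (1:ℝ) ∈ Set.Icc (0:ℝ) 1) zero_le_one
  simp only [φ, hv] at this
  simp at this
  linarith

theorem aux_descent_lower (f : E → ℝ) (f' : E → E) (L : ℝ)
    (hf : ∀ x, HasGradientAt f (f' x) x)
    (hlip : ∀ x y, ‖f' x - f' y‖ ≤ L * ‖x - y‖) (x y : E) :
    f x + ⟪f' x, y - x⟫ - L / 2 * ‖y - x‖ ^ 2 ≤ f y := by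
  have := aux_descent (fun z => - f z) (fun z => - f' z) L
    (fun z => by
      rw [hasGradientAt_iff_hasFDerivAt]
      rw [map_neg]
      exact (hf z).hasFDerivAt.neg)
    (fun a b => by
      have := hlip a b
      rw [← norm_neg] at this
      rwa [show - f' a - - f' b = -(f' a - f' b) by abel]) x y
  simp only [inner_neg_left] at this
  linarith

/-- One step of the method. -/
theorem aux_step (f g : E → ℝ) (f' : E → E) (L : ℝ) (hL : 0 < L)
    (hf : ∀ x, HasGradientAt f (f' x) x)
    (hlip : ∀ x y, ‖f' x - f' y‖ ≤ L * ‖x - y‖)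
    (K : E → ℝ) (K' : E → E) (ε εlo εhi m M : ℝ) (hm : 0 < m) (hmM : m ≤ M)
    (hK : ∀ y, HasGradientAt K (K' y) y)
    (hKs : ∀ y z : E, K y + ⟪K' y, z - y⟫ + m / 2 * ‖z - y‖ ^ 2 ≤ K z)
    (hKl : ∀ y z : E, ‖K' y - K' z‖ ≤ M * ‖y - z‖)
    (hεlo : 0 < εlo) (hεhi : εhi * L < m) (hε : ε ∈ Set.Icc εlo εhi)
    (x y : E) (hy : y ∈ bregT f' g K K' ε x) :
    (∀ u, f y + g y + (m / εhi - L) / 2 * ‖y - x‖ ^ 2 ≤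
      f u + g u + (L / 2 + M / (2 * εlo)) * ‖u - x‖ ^ 2) ∧
    (f y + g y + (m / εhi - L) / 2 * ‖y - x‖ ^ 2 ≤ f x + g x) ∧
    ∃ ξ ∈ proxSubdiff (fun z => f z + g z) y, ‖ξ‖ ≤ (L + M / εlo) * ‖y - x‖ := by
  obtain ⟨h1, h2⟩ := hε
  have hε0 : 0 < ε := lt_of_lt_of_le hεlo h1
  have hM : 0 < M := lt_of_lt_of_le hm hmM
  have hinv1 : ε⁻¹ ≤ εlo⁻¹ := inv_anti₀ hεlo h1
  have hinv2 : εhi⁻¹ ≤ ε⁻¹ := inv_anti₀ hε0 h2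
  have hinv0 : 0 < ε⁻¹ := inv_pos.2 hε0
  have key1 : ∀ u, f y + g y + (m / εhi - L) / 2 * ‖y - x‖ ^ 2 ≤
      f u + g u + (L / 2 + M / (2 * εlo)) * ‖u - x‖ ^ 2 := by
    intro u
    have a1 := aux_descent f f' L hf hlip x y
    have a2 := aux_descent_lower f f' L hf hlip x u
    have a3 := hy u
    have a4 := aux_descent K K' M hK hKl x u
    have a5 := hKs x y
    have b1 : m / εhi / 2 * ‖y - x‖ ^ 2 ≤ bregD K K' x y / ε := by
      have : m / 2 * ‖y - x‖ ^ 2 ≤ bregD K K' x y := by unfold bregD; linarith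
      calc m / εhi / 2 * ‖y - x‖ ^ 2 = (m / 2 * ‖y - x‖ ^ 2) * εhi⁻¹ := by ring
        _ ≤ (m / 2 * ‖y - x‖ ^ 2) * ε⁻¹ := by gcongr
        _ ≤ bregD K K' x y * ε⁻¹ := by gcongr
        _ = _ := by rw [div_eq_mul_inv]
    have b2 : bregD K K' x u / ε ≤ M / (2 * εlo) * ‖u - x‖ ^ 2 := by
      have : bregD K K' x u ≤ M / 2 * ‖u - x‖ ^ 2 := by unfold bregD; linarith
      calc bregD K K' x u / ε = bregD K K' x u * ε⁻¹ := by rw [div_eq_mul_inv]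
        _ ≤ (M / 2 * ‖u - x‖ ^ 2) * ε⁻¹ := by gcongr
        _ ≤ (M / 2 * ‖u - x‖ ^ 2) * εlo⁻¹ := by gcongr
        _ = _ := by rw [mul_comm 2 εlo, div_mul_eq_div_div]; ring
    linarith
  refine ⟨key1, by simpa using key1 x, ?_⟩
  refine ⟨f' y - f' x - ε⁻¹ • (K' y - K' x), ?_, ?_⟩
  · refine ⟨L / 2 + M / 2 * ε⁻¹, by positivity, 1, one_pos, fun z _ => ?_⟩
    have a1 := aux_descent_lower f f' L hf hlip y z
    have a2 := hy z
    have a3 := aux_descent K K' M hK hKl y z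
    have e1 : ⟪f' x, z - x⟫ = ⟪f' x, z - y⟫ + ⟪f' x, y - x⟫ := by
      rw [← inner_add_right]; congr 1; abel
    have e2 : ⟪K' x, z - x⟫ = ⟪K' x, z - y⟫ + ⟪K' x, y - x⟫ := by
      rw [← inner_add_right]; congr 1; abel
    have b : bregD K K' x z / ε - bregD K K' x y / ε ≤
        ε⁻¹ * (⟪K' y, z - y⟫ - ⟪K' x, z - y⟫ + M / 2 * ‖z - y‖ ^ 2) := by
      rw [← sub_div, div_eq_mul_inv, mul_comm]
      apply mul_le_mul_of_nonneg_left _ hinv0.le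
      unfold bregD
      linarith
    simp only [inner_sub_left, real_inner_smul_left] at *
    linarith
  · calc ‖f' y - f' x - ε⁻¹ • (K' y - K' x)‖ ≤ ‖f' y - f' x‖ + ‖ε⁻¹ • (K' y - K' x)‖ :=
          norm_sub_le _ _
      _ = ‖f' y - f' x‖ + ε⁻¹ * ‖K' y - K' x‖ := by
          rw [norm_smul, Real.norm_of_nonneg hinv0.le]
      _ ≤ L * ‖y - x‖ + εlo⁻¹ * (M * ‖y - x‖) := by
          gcongr
          · exact hlip y x
          · exact hKl y x
      _ = _ := by ring

/-- Q-linear convergence of the values and R-linear convergence of the iterates of VBPG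
under a level-set subdifferential error bound at the limit point. -/
theorem stmt12
    (f g : E → ℝ) (f' : E → E) (L : ℝ)
    (hL : 0 < L)
    (hf : ∀ x, HasGradientAt f (f' x) x)
    (hlip : ∀ x y, ‖f' x - f' y‖ ≤ L * ‖x - y‖)
    (hg : Continuous g)
    (hlevel : ∀ r : ℝ, Bornology.IsBounded {x : E | f x + g x ≤ r})
    (Kk : ℕ → E → ℝ) (Kk' : ℕ → E → E) (mk Mk : ℕ → ℝ) (εk : ℕ → ℝ) (εlo εhi : ℝ)
    (x : ℕ → E) (m M : ℝ) (hm : 0 < m) (hmM : m ≤ M)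
    (hmk : ∀ k, m ≤ mk k) (hMk : ∀ k, Mk k ≤ M)
    (hKk : ∀ k y, HasGradientAt (Kk k) (Kk' k y) y)
    (hKkstrong : ∀ k (y z : E), Kk k y + ⟪Kk' k y, z - y⟫ + mk k / 2 * ‖z - y‖ ^ 2 ≤ Kk k z)
    (hKklip : ∀ k (y z : E), ‖Kk' k y - Kk' k z‖ ≤ Mk k * ‖y - z‖)
    (hεlo : 0 < εlo) (hεle : εlo ≤ εhi) (hεhi : εhi * L < m)
    (hεk : ∀ k, εk k ∈ Set.Icc εlo εhi)
    (hiter : ∀ k, x (k+1) ∈ bregT f' g (Kk k) (Kk' k) (εk k) (x k))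
    (xbar : E) (hlim : Tendsto x atTop (nhds xbar))
    (γ η ν c₃ : ℝ)
    (hγ0 : 0 < γ) (hγ1 : γ ≤ 1) (hη : 0 < η) (hν : 0 < ν) (hc₃ : 0 < c₃)
    (hEB : ∀ y : E, ‖y - xbar‖ < η → f xbar + g xbar < f y + g y →
      f y + g y < f xbar + g xbar + ν →
      ∀ ξ ∈ proxSubdiff (fun z => f z + g z) y,
        Metric.infDist y {z : E | f z + g z ≤ f xbar + g xbar} ^ γ ≤ c₃ * ‖ξ‖) :
    ∃ β : ℝ, 0 < β ∧ β < 1 ∧ ∃ k₀ : ℕ, ∃ C : ℝ, 0 < C ∧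
      (∀ k ≥ k₀, f (x (k+1)) + g (x (k+1)) - (f xbar + g xbar) ≤
        β * (f (x k) + g (x k) - (f xbar + g xbar))) ∧
      Summable (fun k => f (x k) + g (x k) - (f xbar + g xbar)) ∧
      (∀ k, ‖x k - xbar‖ ≤ C * Real.sqrt β ^ k) := by
  have hεhi0 : 0 < εhi := lt_of_lt_of_le hεlo hεle
  have hM : 0 < M := lt_of_lt_of_le hm hmM
  have hstep := fun k => aux_step f g f' L hL hf hlip (Kk k) (Kk' k) (εk k) εlo εhi m M hm hmM
    (hKk k) (fun y z => le_trans (by have := hmk k; gcongr) (hKkstrong k y z))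
    (fun y z => (hKklip k y z).trans (by have := hMk k; gcongr)) hεlo hεhi (hεk k) (x k) (x (k+1))
    (hiter k)
  set a : ℝ := (m / εhi - L) / 2 with ha_def
  set C₁ : ℝ := L / 2 + M / (2 * εlo) with hC₁
  set c₄ : ℝ := L + M / εlo with hc₄
  have ha : 0 < a := by
    have : L < m / εhi := by rw [lt_div_iff₀ hεhi0]; linarith
    simp only [ha_def]; linarith
  have hC₁0 : 0 < C₁ := by positivity
  have hc₄0 : 0 < c₄ := by positivity
  clear_value a C₁ c₄
  have hfc : Continuous f := continuous_iff_continuousAt.2 fun z => (hf z).continuousAt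
  have hFc : Continuous (fun z => f z + g z) := hfc.add hg
  set Fb := f xbar + g xbar with hFb
  set Δ : ℕ → ℝ := fun k => f (x k) + g (x k) - Fb with hΔ
  have hdec : ∀ k, Δ (k+1) + a * ‖x (k+1) - x k‖ ^ 2 ≤ Δ k := by
    intro k
    have := (hstep k).2.1
    simp only [hΔ]; linarith
  have hanti : Antitone Δ := antitone_nat_of_succ_le fun k => by
    have := hdec k
    have : 0 ≤ a * ‖x (k+1) - x k‖ ^ 2 := by positivity
    linarith
  have hΔlim : Tendsto Δ atTop (nhds 0) := by
    have := ((hFc.tendsto xbar).comp hlim).sub_const Fb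
    simpa [hΔ, hFb, Function.comp_def] using this
  have hΔ0 : ∀ k, 0 ≤ Δ k := fun k => hanti.le_of_tendsto hΔlim k
  set S : Set E := {z : E | f z + g z ≤ Fb} with hS
  have hSc : IsClosed S := isClosed_le hFc continuous_const
  have hSx : xbar ∈ S := le_of_eq hFb.symm
  set c : ℝ := c₃ * c₄ with hc
  have hc0 : 0 < c := by positivity
  set θ : ℝ := C₁ * (c + 1) ^ 2 / a with hθ
  have hθ0 : 0 < θ := by positivity
  have hev : ∀ᶠ k in atTop, ‖x (k+1) - xbar‖ < min η 1 ∧ Δ (k+1) < ν := by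
    have h1 : ∀ᶠ k in atTop, ‖x k - xbar‖ < min η 1 := by
      have := hlim.eventually (Metric.ball_mem_nhds xbar (lt_min hη one_pos))
      filter_upwards [this] with k hk
      rwa [← dist_eq_norm]
    have h2 : ∀ᶠ k in atTop, Δ k < ν := hΔlim.eventually (gt_mem_nhds hν)
    exact (tendsto_add_atTop_nat 1).eventually (h1.and h2)
  obtain ⟨k₀, hk₀⟩ := eventually_atTop.1 hev
  have hβ : ∀ k ≥ k₀, Δ (k+1) ≤ θ / (1 + θ) * Δ k := by
    intro k hk
    obtain ⟨hx1, hx2⟩ := hk₀ k hk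
    have hm1 : Δ (k+1) ≤ θ * (Δ k - Δ (k+1)) := by
      rcases (hΔ0 (k+1)).eq_or_lt with h0 | hpos
      · rw [← h0]
        exact mul_nonneg hθ0.le (by linarith [hΔ0 k])
      · obtain ⟨hA, -, ξ, hξ, hξn⟩ := hstep k
        have hE := hEB (x (k+1)) (hx1.trans_le (min_le_left _ _))
          (by simp only [hΔ] at hpos; linarith) (by simp only [hΔ] at hx2; linarith) ξ hξ
        set s := ‖x (k+1) - x k‖ with hs
        have hd0 : 0 ≤ infDist (x (k+1)) S := infDist_nonneg
        have hd1 : infDist (x (k+1)) S ≤ 1 := by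
          have := infDist_le_dist_of_mem (x := x (k+1)) hSx
          rw [dist_eq_norm] at this
          exact this.trans (hx1.le.trans (min_le_right _ _))
        have hd2 : infDist (x (k+1)) S ≤ infDist (x (k+1)) S ^ γ :=
          Real.self_le_rpow_of_le_one hd0 hd1 hγ1
        have hd3 : infDist (x (k+1)) S ≤ c * s := by
          calc _ ≤ _ := hd2
            _ ≤ c₃ * ‖ξ‖ := hE
            _ ≤ c₃ * (c₄ * s) := by gcongr
            _ = c * s := by rw [hc]; ring
        have hd4 : infDist (x k) S ≤ (c + 1) * s := by
          have := infDist_le_infDist_add_dist (s := S) (x := x k) (y := x (k+1))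
          rw [dist_comm, dist_eq_norm] at this
          linarith
        obtain ⟨u, huS, hu⟩ := hSc.exists_infDist_eq_dist ⟨xbar, hSx⟩ (x k)
        rw [hu, dist_comm, dist_eq_norm] at hd4
        have hAu := hA u
        have hu' : f u + g u ≤ Fb := huS
        have h5 : Δ (k+1) ≤ C₁ * ((c + 1) * s) ^ 2 := by
          have : C₁ * ‖u - x k‖ ^ 2 ≤ C₁ * ((c + 1) * s) ^ 2 := by gcongr
          have : 0 ≤ a * s ^ 2 := by positivity
          simp only [hΔ]; linarith
        calc Δ (k+1) ≤ C₁ * ((c + 1) * s) ^ 2 := h5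
          _ = θ * (a * s ^ 2) := by rw [hθ]; field_simp
          _ ≤ θ * (Δ k - Δ (k+1)) := by
            have := hdec k
            gcongr
            linarith
    rw [div_mul_eq_mul_div, le_div_iff₀ (by linarith)]
    linarith
  set β : ℝ := θ / (1 + θ) with hβdef
  have hβ0 : 0 < β := by positivity
  have hβ1 : β < 1 := by rw [hβdef, div_lt_one (by linarith)]; linarith
  clear_value β
  set A : ℝ := Δ 0 / β ^ k₀ with hA
  have hA0 : 0 ≤ A := div_nonneg (hΔ0 0) (by positivity)
  have hgeo : ∀ k, Δ k ≤ A * β ^ k := by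
    intro k
    rcases le_total k k₀ with hk | hk
    · calc Δ k ≤ Δ 0 := hanti (Nat.zero_le k)
        _ = A * β ^ k₀ := by rw [hA]; field_simp
        _ ≤ A * β ^ k := mul_le_mul_of_nonneg_left
            (pow_le_pow_of_le_one hβ0.le hβ1.le hk) hA0
    · induction k, hk using Nat.le_induction with
      | base =>
        calc Δ k₀ ≤ Δ 0 := hanti (Nat.zero_le _)
          _ = A * β ^ k₀ := by rw [hA]; field_simp
      | succ k hk ih =>
        calc Δ (k+1) ≤ β * Δ k := hβ k hk
          _ ≤ β * (A * β ^ k) := by gcongr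
          _ = _ := by ring
  have hr0 : 0 < Real.sqrt β := Real.sqrt_pos.2 hβ0
  have hr1 : Real.sqrt β < 1 := by rw [Real.sqrt_lt' one_pos]; simpa using hβ1
  have hgx : ∀ k, dist (x k) (x (k+1)) ≤ (Real.sqrt (A / a)) * Real.sqrt β ^ k := by
    intro k
    rw [dist_comm, dist_eq_norm]
    apply (pow_le_pow_iff_left₀ (norm_nonneg _) (by positivity) two_ne_zero).1
    rw [mul_pow, Real.sq_sqrt (by positivity), ← pow_mul, mul_comm k 2, pow_mul,
      Real.sq_sqrt hβ0.le, div_mul_eq_mul_div, le_div_iff₀ ha]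
    linarith [hdec k, hΔ0 (k+1), hgeo k]
  refine ⟨β, hβ0, hβ1, k₀, Real.sqrt (A / a) / (1 - Real.sqrt β) + 1, ?_, hβ, ?_, ?_⟩
  · have : 0 < 1 - Real.sqrt β := by linarith
    positivity
  · exact Summable.of_nonneg_of_le hΔ0 hgeo
      ((summable_geometric_of_lt_one hβ0.le hβ1).mul_left A)
  · intro k
    have := dist_le_of_le_geometric_of_tendsto (Real.sqrt β) (Real.sqrt (A / a)) hr1 hgx hlim k
    rw [dist_eq_norm] at this
    have h2 : 0 < Real.sqrt β ^ k := by positivity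
    calc _ ≤ _ := this
      _ = Real.sqrt (A / a) / (1 - Real.sqrt β) * Real.sqrt β ^ k := by ring
      _ ≤ _ := by gcongr; linarith
end
end
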